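/- arXiv:1602.02603 — 2 statements merged into one kernel-verified Lean document; each statement's English description precedes it below -/
import Mathlib

section
/- Virtually isomorphic groups are quasi-isometric (one-step version): Let Γ' be a group generated by a finite set S', and let φ : Γ → Γ' be a group homomorphism whose kernel is finite and whose image is a finite-index subgroup of Γ'. Then Γ is finitely generated, and for every finite generating set S of Γ there exist k ≥ 1 and c ≥ 0 such that φ is a (k,c)-quasi-isometry from (Γ, d_S) to (Γ', d_{S'}). -/
/-!
Let `D` be a finite set of representatives of the right cosets of `φ.range`, and choose
`g : Γ' → Γ` with `y ∈ φ (g y) * D` for all `y`. For a generator `s`, the element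
`(g y)⁻¹ * g (y * s)` lies in `T = φ ⁻¹' (D * S'^{±1} * D⁻¹)`, which is finite because `φ` has
finite fibers (`finite_preimage_of_finite_ker`). Following a word for `φ x` from `1` to `φ x`
writes `(g 1)⁻¹ * g (φ x)` as a product of elements of `T` (`increment_mem_closure`); since
`(g 1)⁻¹` and `(g (φ x))⁻¹ * x` lie in `φ ⁻¹' D`, it follows that `T ∪ φ ⁻¹' D` generates `Γ`.

For any finite generating set `S` the same finiteness makes `g` Lipschitz
(`wordLength_lipschitz`), while `φ` is Lipschitz as a homomorphism, and `φ ∘ g` and `g ∘ φ` are at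
bounded distance from the identities, the displacements lying in `D` and `φ ⁻¹' D`. Two Lipschitz
maps which are coarsely inverse to each other are quasi-isometries (`qiEmbOn_of_lipschitz`).
-/

/-- The word length of `γ` with respect to a generating set `S`: the least `n` such that
`γ` is a product of `n` elements of `S ∪ S⁻¹`. -/
noncomputable def wordLength {Γ : Type*} [Group Γ] (S : Set Γ) (γ : Γ) : ℕ :=
  sInf {n | ∃ l : List Γ, l.length = n ∧ (∀ x ∈ l, x ∈ S ∨ x⁻¹ ∈ S) ∧ l.prod = γ}

/-- The word metric on a group with respect to a generating set `S`. -/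
noncomputable def wordDist {Γ : Type*} [Group Γ] (S : Set Γ) (γ₁ γ₂ : Γ) : ℝ :=
  (wordLength S (γ₁⁻¹ * γ₂) : ℝ)

/-- `f` is a `(k,c)`-quasi-isometric embedding with respect to the distance functions
`dX`, `dY`. -/
def QIEmbOn {X Y : Type*} (dX : X → X → ℝ) (dY : Y → Y → ℝ) (k c : ℝ) (f : X → Y) : Prop :=
  ∀ p q : X, dX p q / k - c ≤ dY (f p) (f q) ∧ dY (f p) (f q) ≤ k * dX p q + c

/-- `f` is a `(k,c)`-quasi-isometry with respect to the distance functions `dX`, `dY`: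
it is a `(k,c)`-quasi-isometric embedding admitting a `(k,c)`-quasi-inverse. -/
def QIOn {X Y : Type*} (dX : X → X → ℝ) (dY : Y → Y → ℝ) (k c : ℝ) (f : X → Y) : Prop :=
  QIEmbOn dX dY k c f ∧ ∃ g : Y → X, QIEmbOn dY dX k c g ∧
    (∀ y, dY (f (g y)) y ≤ c) ∧ (∀ x, dX (g (f x)) x ≤ c)

section WordLength

variable {G : Type*} [Group G] {S : Set G}

lemma wordLength_le {l : List G} (hl : ∀ x ∈ l, x ∈ S ∨ x⁻¹ ∈ S) :
    wordLength S l.prod ≤ l.length :=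
  Nat.sInf_le ⟨l, rfl, hl, rfl⟩

/-- When `S` generates, the infimum defining the word length is attained; otherwise it could be
the junk value `sInf ∅ = 0`. -/
lemma exists_word (hS : Subgroup.closure S = ⊤) (a : G) :
    ∃ l : List G, l.length = wordLength S a ∧ (∀ x ∈ l, x ∈ S ∨ x⁻¹ ∈ S) ∧ l.prod = a := by
  have ha : a ∈ Subgroup.closure S := hS ▸ Subgroup.mem_top a
  rw [← Subgroup.mem_toSubmonoid, Subgroup.closure_toSubmonoid] at ha
  obtain ⟨l, hl, hp⟩ := Submonoid.exists_list_of_mem_closure ha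
  exact Nat.sInf_mem (s := {n | ∃ l : List G, l.length = n ∧
    (∀ x ∈ l, x ∈ S ∨ x⁻¹ ∈ S) ∧ l.prod = a}) ⟨l.length, l, rfl, hl, hp⟩

lemma wordLength_mul_le (hS : Subgroup.closure S = ⊤) (a b : G) :
    wordLength S (a * b) ≤ wordLength S a + wordLength S b := by
  obtain ⟨l, hl, hlS, rfl⟩ := exists_word hS a
  obtain ⟨m, hm, hmS, rfl⟩ := exists_word hS b
  rw [← hl, ← hm, ← List.prod_append, ← List.length_append]
  refine wordLength_le fun x hx => ?_
  rcases List.mem_append.1 hx with h | h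
  exacts [hlS x h, hmS x h]

lemma wordLength_inv_le (hS : Subgroup.closure S = ⊤) (a : G) :
    wordLength S a⁻¹ ≤ wordLength S a := by
  obtain ⟨l, hl, hlS, rfl⟩ := exists_word hS a
  rw [← hl, List.prod_inv_reverse]
  refine (wordLength_le fun x hx => ?_).trans (by simp)
  rw [List.mem_reverse, List.mem_map] at hx
  obtain ⟨y, hy, rfl⟩ := hx
  rw [inv_inv]
  exact (hlS y hy).symm

lemma wordDist_comm (hS : Subgroup.closure S = ⊤) (a b : G) :
    wordDist S a b = wordDist S b a := by
  have h1 := wordLength_inv_le hS (a⁻¹ * b)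
  have h2 := wordLength_inv_le hS (b⁻¹ * a)
  rw [mul_inv_rev, inv_inv] at h1 h2
  exact congrArg Nat.cast (le_antisymm h2 h1)

lemma wordDist_triangle (hS : Subgroup.closure S = ⊤) (a b c : G) :
    wordDist S a c ≤ wordDist S a b + wordDist S b c := by
  have h := wordLength_mul_le hS (a⁻¹ * b) (b⁻¹ * c)
  rw [show a⁻¹ * b * (b⁻¹ * c) = a⁻¹ * c by group] at h
  unfold wordDist
  exact_mod_cast h

/-- A map between groups that moves points joined by an edge of the Cayley graph by at most `M`
is `M`-Lipschitz for the word metrics. -/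
lemma wordLength_lipschitz {H : Type*} [Group H] {R : Set H} (hS : Subgroup.closure S = ⊤)
    (hR : Subgroup.closure R = ⊤) (f : G → H) (M : ℕ)
    (hf : ∀ x s, (s ∈ S ∨ s⁻¹ ∈ S) → wordLength R ((f x)⁻¹ * f (x * s)) ≤ M) (x y : G) :
    wordDist R (f x) (f y) ≤ M * wordDist S x y := by
  have key : ∀ (l : List G), (∀ s ∈ l, s ∈ S ∨ s⁻¹ ∈ S) → ∀ x,
      wordLength R ((f x)⁻¹ * f (x * l.prod)) ≤ M * l.length := by
    intro l
    induction l with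
    | nil =>
      intro _ x
      simpa using wordLength_le (S := R) (l := []) (by simp)
    | cons s l ih =>
      intro hl x
      have h1 := hf x s (hl s (by simp))
      have h2 := ih (fun t ht => hl t (by simp [ht])) (x * s)
      have h3 := wordLength_mul_le hR ((f x)⁻¹ * f (x * s)) ((f (x * s))⁻¹ * f (x * s * l.prod))
      rw [show (f x)⁻¹ * f (x * s) * ((f (x * s))⁻¹ * f (x * s * l.prod))
        = (f x)⁻¹ * f (x * s * l.prod) by group] at h3
      rw [List.prod_cons, List.length_cons, ← mul_assoc, mul_add, mul_one]
      omega
  obtain ⟨l, hl, hlS, hp⟩ := exists_word hS (x⁻¹ * y)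
  have h := key l hlS x
  rw [hp, mul_inv_cancel_left, hl] at h
  unfold wordDist
  exact_mod_cast h

end WordLength

/-- Along a map whose increments over edges lie in `T`, increments over words lie in the subgroup
generated by `T`. -/
lemma increment_mem_closure {G H : Type*} [Group G] [Group H] {S : Set G} {T : Set H}
    (f : G → H) (hf : ∀ x s, (s ∈ S ∨ s⁻¹ ∈ S) → (f x)⁻¹ * f (x * s) ∈ T) (l : List G)
    (hl : ∀ s ∈ l, s ∈ S ∨ s⁻¹ ∈ S) (x : G) :
    (f x)⁻¹ * f (x * l.prod) ∈ Subgroup.closure T := by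
  induction l generalizing x with
  | nil => simp
  | cons s l ih =>
    have h1 := Subgroup.subset_closure (hf x s (hl s (by simp)))
    have h2 := ih (fun t ht => hl t (by simp [ht])) (x * s)
    have h3 := mul_mem h1 h2
    rw [List.prod_cons, ← mul_assoc]
    rwa [show (f x)⁻¹ * f (x * s) * ((f (x * s))⁻¹ * f (x * s * l.prod))
      = (f x)⁻¹ * f (x * s * l.prod) by group] at h3

lemma finite_preimage_of_finite_ker {G H : Type*} [Group G] [Group H] (φ : G →* H)
    (hker : Finite φ.ker) {D : Set H} (hD : D.Finite) : (φ ⁻¹' D).Finite := by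
  refine hD.preimage' fun b _ => ?_
  rcases (φ ⁻¹' {b}).eq_empty_or_nonempty with h | ⟨x, hx⟩
  · simp [h]
  · -- a nonempty fiber is a coset of the kernel
    refine ((Set.toFinite (φ.ker : Set G)).image (x * ·)).subset fun y hy => ?_
    simp only [Set.mem_preimage, Set.mem_singleton_iff] at hx hy
    exact ⟨x⁻¹ * y, by simp [MonoidHom.mem_ker, hx, hy], by simp⟩

/-- Every element of `H` is, up to a finite set `D` of right multipliers, in the range of `φ`. -/
lemma exists_coset_section {G H : Type*} [Group G] [Group H] (φ : G →* H)
    (hindex : φ.range.index ≠ 0) :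
    ∃ (D : Set H) (g : H → G), D.Finite ∧ ∀ y, (φ (g y))⁻¹ * y ∈ D := by
  have : φ.range.FiniteIndex := ⟨hindex⟩
  have h : ∀ y : H, ∃ x : G, (φ x)⁻¹ * y ∈
      Set.range fun q : H ⧸ φ.range => (Quotient.out q)⁻¹ := by
    intro y
    -- right cosets of the range correspond to left cosets through inversion
    obtain ⟨⟨_, x, rfl⟩, hx⟩ := QuotientGroup.mk_out_eq_mul φ.range y⁻¹
    exact ⟨x, ((y⁻¹ : H) : H ⧸ φ.range), by simp [hx]⟩
  choose g hg using h
  exact ⟨_, g, Set.finite_range _, hg⟩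

lemma exists_wordLength_bound {G : Type*} [Group G] (S : Set G) {T : Set G} (hT : T.Finite) :
    ∃ M : ℕ, ∀ t ∈ T, wordLength S t ≤ M := by
  obtain ⟨M, hM⟩ := (hT.image (wordLength S)).bddAbove
  exact ⟨M, fun t ht => hM ⟨t, ht, rfl⟩⟩

/-- A `k`-Lipschitz map with a `k`-Lipschitz coarse left inverse is a quasi-isometric
embedding. -/
lemma qiEmbOn_of_lipschitz {G H : Type*} [Group G] [Group H] {S : Set G} {R : Set H}
    (hS : Subgroup.closure S = ⊤) (f : G → H) (g : H → G) {k c : ℝ}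
    (hk : 1 ≤ k) (hc : 0 ≤ c)
    (hf : ∀ x y, wordDist R (f x) (f y) ≤ k * wordDist S x y)
    (hg : ∀ x y, wordDist S (g x) (g y) ≤ k * wordDist R x y)
    (hgf : ∀ x, 2 * wordDist S (g (f x)) x ≤ c) :
    QIEmbOn (wordDist S) (wordDist R) k c f := by
  intro p q
  refine ⟨?_, by linarith [hf p q]⟩
  have h1 := wordDist_triangle hS p (g (f p)) q
  have h2 := wordDist_triangle hS (g (f p)) (g (f q)) q
  rw [wordDist_comm hS p (g (f p))] at h1
  have h3 := hg (f p) (f q)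
  have h4 := hgf p
  have h5 := hgf q
  have h6 : c ≤ c * k := le_mul_of_one_le_right hc hk
  rw [sub_le_iff_le_add, div_le_iff₀ (by linarith)]
  linarith

/-- Virtually isomorphic groups are quasi-isometric (one-step version): a homomorphism
`φ : Γ → Γ'` with finite kernel and finite-index image, where `Γ'` is generated by the finite
set `S'`, forces `Γ` to be finitely generated, and `φ` is a quasi-isometry for every choice of
finite generating set `S` of `Γ`. -/
theorem virtually_isomorphic_implies_quasi_isometric {Γ Γ' : Type*} [Group Γ] [Group Γ']
    (S' : Finset Γ') (hS' : Subgroup.closure (S' : Set Γ') = ⊤)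
    (φ : Γ →* Γ') (hker : Finite φ.ker) (hindex : φ.range.index ≠ 0) :
    (∃ S : Finset Γ, Subgroup.closure (S : Set Γ) = ⊤) ∧
    ∀ S : Finset Γ, Subgroup.closure (S : Set Γ) = ⊤ →
      ∃ k ≥ (1 : ℝ), ∃ c ≥ (0 : ℝ),
        QIOn (wordDist (S : Set Γ)) (wordDist (S' : Set Γ')) k c φ := by
  obtain ⟨D, g, hD, hg⟩ := exists_coset_section φ hindex
  set A : Set Γ' := {s | s ∈ S' ∨ s⁻¹ ∈ S'} with hA
  have hAfin : A.Finite := by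
    refine (S'.finite_toSet.union S'.finite_toSet.inv).subset fun s hs => ?_
    simpa [hA] using hs
  -- `φ ((g y)⁻¹ * g (y * s)) = d * s * d'⁻¹`, where `y = φ (g y) * d` and
  -- `y * s = φ (g (y * s)) * d'`
  set T : Set Γ := φ ⁻¹' (Set.image2 (fun a b => a * b⁻¹) (Set.image2 (· * ·) D A) D)
  have hTfin : T.Finite :=
    finite_preimage_of_finite_ker φ hker ((hD.image2 _ hAfin).image2 _ hD)
  have hgT : ∀ y s, (s ∈ (S' : Set Γ') ∨ s⁻¹ ∈ (S' : Set Γ')) →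
      (g y)⁻¹ * g (y * s) ∈ T := fun y s hs =>
    ⟨_, ⟨_, hg y, s, hs, rfl⟩, _, hg (y * s), by simp [mul_assoc]⟩
  have hUfin : (φ ⁻¹' D).Finite := finite_preimage_of_finite_ker φ hker hD
  have hgU : ∀ x, (g (φ x))⁻¹ * x ∈ φ ⁻¹' D := fun x => by simpa using hg (φ x)
  refine ⟨⟨(hTfin.union hUfin).toFinset, ?_⟩, fun S hS => ?_⟩
  · rw [Set.Finite.coe_toFinset, eq_top_iff]
    intro x _
    obtain ⟨l, -, hl, hp⟩ := exists_word hS' (φ x)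
    have h1 := Subgroup.closure_mono (Set.subset_union_left (t := φ ⁻¹' D))
      (increment_mem_closure g hgT l hl 1)
    have h2 : (g 1)⁻¹ ∈ Subgroup.closure (T ∪ φ ⁻¹' D) :=
      Subgroup.subset_closure (Or.inr (by simpa using hgU 1))
    have h3 : (g (φ x))⁻¹ * x ∈ Subgroup.closure (T ∪ φ ⁻¹' D) :=
      Subgroup.subset_closure (Or.inr (hgU x))
    rw [one_mul, hp] at h1
    have h4 := mul_mem (mul_mem (inv_mem h2) h1) h3
    rwa [show (g 1)⁻¹⁻¹ * ((g 1)⁻¹ * g (φ x)) * ((g (φ x))⁻¹ * x) = x by group] at h4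
  · obtain ⟨M, hM⟩ := exists_wordLength_bound (S : Set Γ) hTfin
    obtain ⟨C, hC⟩ := exists_wordLength_bound (S : Set Γ) hUfin
    obtain ⟨C', hC'⟩ := exists_wordLength_bound (S' : Set Γ') hD
    obtain ⟨L, hL⟩ := exists_wordLength_bound (S' : Set Γ')
      ((S.finite_toSet.union S.finite_toSet.inv).image φ)
    have nn : ∀ x y, 0 ≤ wordDist (S : Set Γ) x y := fun _ _ => Nat.cast_nonneg _
    have nn' : ∀ x y, 0 ≤ wordDist (S' : Set Γ') x y := fun _ _ => Nat.cast_nonneg _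
    have hf1 : ∀ x y, wordDist (S' : Set Γ') (φ x) (φ y) ≤
        (L + M + 1) * wordDist (S : Set Γ) x y := fun x y =>
      (wordLength_lipschitz hS hS' φ L (fun x s hs => by
        simpa using hL (φ s) ⟨s, by simpa using hs, rfl⟩) x y).trans
        (mul_le_mul_of_nonneg_right (by linarith [M.cast_nonneg (α := ℝ)]) (nn _ _))
    have hg1 : ∀ x y, wordDist (S : Set Γ) (g x) (g y) ≤
        (L + M + 1) * wordDist (S' : Set Γ') x y := fun x y =>
      (wordLength_lipschitz hS' hS g M (fun x s hs => hM _ (hgT x s hs)) x y).trans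
        (mul_le_mul_of_nonneg_right (by linarith [L.cast_nonneg (α := ℝ)]) (nn' _ _))
    have hgf : ∀ x, wordDist (S : Set Γ) (g (φ x)) x ≤ C := fun x =>
      Nat.cast_le.2 (hC _ (hgU x))
    have hfg : ∀ y, wordDist (S' : Set Γ') (φ (g y)) y ≤ C' := fun y =>
      Nat.cast_le.2 (hC' _ (hg y))
    have c1 := C.cast_nonneg (α := ℝ)
    have c2 := C'.cast_nonneg (α := ℝ)
    have hk : (1 : ℝ) ≤ L + M + 1 := by
      linarith [L.cast_nonneg (α := ℝ), M.cast_nonneg (α := ℝ)]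
    refine ⟨L + M + 1, hk, 2 * C + 2 * C', by linarith,
      qiEmbOn_of_lipschitz hS φ g hk (by linarith) hf1 hg1 fun x => by linarith [hgf x],
      g, qiEmbOn_of_lipschitz hS' g φ hk (by linarith) hg1 hf1 fun y => by linarith [hfg y],
      fun y => by linarith [hfg y], fun x => by linarith [hgf x]⟩
end

section
/- Milnor–Švarc Lemma for quasi-actions: let X be a nonempty geodesic metric space with basepoint x₀, let Γ be a group, and let h be a geometric k-quasi-action of Γ on X. Then Γ is finitely generated, and there exist a finite generating set S of Γ and constants k' ≥ 1, c' ≥ 0, r ≥ 0 such that the map γ ↦ h(γ)(x₀) is a (k',c')-quasi-isometric embedding of (Γ,d_S) into X with r-dense image, hence a quasi-isometry. -/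
/-- The subset `A` is `r`-dense: every point is at distance at most `r` from a point of `A`. -/
def RDenseOn {Y : Type*} (dY : Y → Y → ℝ) (r : ℝ) (A : Set Y) : Prop :=
  ∀ y : Y, ∃ a ∈ A, dY y a ≤ r

/-- The distance function `dX` is geodesic: any two points are joined by an isometric
embedding of the interval `[0, dX x y]`. -/
def GeodesicOn {X : Type*} (dX : X → X → ℝ) : Prop :=
  ∀ x y : X, ∃ γ : ℝ → X, γ 0 = x ∧ γ (dX x y) = y ∧
    ∀ s ∈ Set.Icc (0 : ℝ) (dX x y), ∀ t ∈ Set.Icc (0 : ℝ) (dX x y),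
      dX (γ s) (γ t) = |s - t|

/-- `h` is a `k₀`-quasi-action of the group `Γ` on `X` (with distance function `dX`). -/
def QuasiActionOn {Γ X : Type*} [Group Γ] (dX : X → X → ℝ) (k₀ : ℝ) (h : Γ → X → X) : Prop :=
  (∀ γ : Γ, QIEmbOn dX dX k₀ k₀ (h γ) ∧ RDenseOn dX k₀ (Set.range (h γ))) ∧
  (∀ x : X, dX (h 1 x) x ≤ k₀) ∧
  (∀ γ₁ γ₂ : Γ, ∀ x : X, dX (h (γ₁ * γ₂) x) (h γ₁ (h γ₂ x)) ≤ k₀)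

/-- A quasi-action is cobounded if some orbit is `k'`-dense for some `k' > 0`. -/
def CoboundedQAOn {Γ X : Type*} (dX : X → X → ℝ) (h : Γ → X → X) : Prop :=
  ∃ k' > (0 : ℝ), ∃ x₀ : X, ∀ x : X, ∃ γ : Γ, dX x (h γ x₀) ≤ k'

/-- A quasi-action is proper if every bounded set meets only finitely many of its own
translates. -/
def ProperQAOn {Γ X : Type*} (dX : X → X → ℝ) (h : Γ → X → X) : Prop :=
  ∀ K : Set X, (∃ C : ℝ, ∀ x ∈ K, ∀ y ∈ K, dX x y ≤ C) →
    {γ : Γ | ((h γ '' K) ∩ K).Nonempty}.Finite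

/-- The word length is realized by a word as soon as some word represents the element;
otherwise the infimum defining it would have the default value `0`. -/
lemma exists_word_length_eq {Γ : Type*} [Group Γ] {S : Set Γ} {g : Γ}
    (hg : ∃ l : List Γ, (∀ x ∈ l, x ∈ S ∨ x⁻¹ ∈ S) ∧ l.prod = g) :
    ∃ l : List Γ, l.length = wordLength S g ∧ (∀ x ∈ l, x ∈ S ∨ x⁻¹ ∈ S) ∧ l.prod = g := by
  obtain ⟨l, hl, hp⟩ := hg
  exact Nat.sInf_mem (s := {n | ∃ l : List Γ, l.length = n ∧ (∀ x ∈ l, x ∈ S ∨ x⁻¹ ∈ S) ∧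
    l.prod = g}) ⟨l.length, l, rfl, hl, hp⟩

/-- A point at distance at most `n + 1` is reached through a point at distance at most `n`
followed by a jump of length at most `1`. -/
lemma GeodesicOn.exists_between {X : Type*} [MetricSpace X]
    (hgeodesic : GeodesicOn (dist : X → X → ℝ)) {x y : X} {n : ℕ}
    (hxy : dist x y ≤ (n + 1 : ℕ)) : ∃ z, dist x z ≤ n ∧ dist z y ≤ 1 := by
  obtain ⟨c, h0, h1, hc⟩ := hgeodesic x y
  have hd : 0 ≤ dist x y := dist_nonneg
  push_cast at hxy
  have hn : (0 : ℝ) ≤ n := n.cast_nonneg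
  -- The minimum covers the case where `x` and `y` are already within distance `n`.
  have ht : min (n : ℝ) (dist x y) ∈ Set.Icc 0 (dist x y) := ⟨le_min hn hd, min_le_right _ _⟩
  refine ⟨c (min n (dist x y)), ?_, ?_⟩
  · have := hc 0 ⟨le_rfl, hd⟩ _ ht
    rw [h0] at this
    rw [this, zero_sub, abs_neg, abs_of_nonneg ht.1]
    exact min_le_left _ _
  · have := hc _ ht (dist x y) ⟨hd, le_rfl⟩
    rw [h1] at this
    rw [this, abs_sub_comm, abs_of_nonneg (sub_nonneg.2 ht.2)]
    rcases min_cases (n : ℝ) (dist x y) with h | h <;> linarith [h.1]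

/-- Left translation changes distances between orbit points in a controlled way. -/
lemma orbit_displacement {Γ : Type*} [Group Γ] {X : Type*} [MetricSpace X] {k : ℝ}
    {h : Γ → X → X} (hqa : QuasiActionOn dist k h) (x₀ : X) (γ g : Γ) :
    dist x₀ (h g x₀) / k - 2 * k ≤ dist (h γ x₀) (h (γ * g) x₀) ∧
      dist (h γ x₀) (h (γ * g) x₀) ≤ k * dist x₀ (h g x₀) + 2 * k := by
  have h1 := (hqa.1 γ).1 x₀ (h g x₀)
  have h2 := hqa.2.2 γ g x₀
  have h3 := dist_triangle (h γ x₀) (h (γ * g) x₀) (h γ (h g x₀))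
  have h4 := dist_triangle_right (h γ x₀) (h (γ * g) x₀) (h γ (h g x₀))
  constructor <;> linarith [h1.1, h1.2]

/-- Chaining along a geodesic: if nearby orbit points differ by an element of `S`, then orbit
points near two points at distance at most `n` differ by a word of length `n + 1`. -/
lemma exists_word_of_dist_le {Γ : Type*} [Group Γ] {X : Type*} [MetricSpace X]
    (hgeodesic : GeodesicOn (dist : X → X → ℝ)) {φ : Γ → X} {r : ℝ} {S : Set Γ}
    (hdense : ∀ x, ∃ γ, dist x (φ γ) ≤ r)
    (hS : ∀ γ₁ γ₂, dist (φ γ₁) (φ γ₂) ≤ 2 * r + 1 → γ₁⁻¹ * γ₂ ∈ S) (n : ℕ) :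
    ∀ (x y : X) (γ₁ γ₂ : Γ), dist x y ≤ n → dist x (φ γ₁) ≤ r → dist y (φ γ₂) ≤ r →
      ∃ l : List Γ, l.length = n + 1 ∧ (∀ s ∈ l, s ∈ S) ∧ l.prod = γ₁⁻¹ * γ₂ := by
  have near : ∀ (x y : X) (γ₁ γ₂ : Γ), dist x y ≤ 1 → dist x (φ γ₁) ≤ r → dist y (φ γ₂) ≤ r →
      γ₁⁻¹ * γ₂ ∈ S := by
    intro x y γ₁ γ₂ hxy hx hy
    apply hS
    have h1 := dist_triangle4 (φ γ₁) x y (φ γ₂)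
    rw [dist_comm (φ γ₁) x] at h1
    linarith
  induction n with
  | zero =>
    intro x y γ₁ γ₂ hxy hx hy
    push_cast at hxy
    exact ⟨[γ₁⁻¹ * γ₂], by simp, by simpa using near x y γ₁ γ₂ (by linarith) hx hy, by simp⟩
  | succ n ih =>
    intro x y γ₁ γ₂ hxy hx hy
    obtain ⟨z, hxz, hzy⟩ := hgeodesic.exists_between hxy
    obtain ⟨ν, hν⟩ := hdense z
    obtain ⟨l, hl, hlS, hp⟩ := ih x z γ₁ ν hxz hx hν
    refine ⟨l ++ [ν⁻¹ * γ₂], by simp [hl], ?_, by simp [hp, mul_assoc]⟩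
    intro s hs
    rcases List.mem_append.1 hs with hs | hs
    · exact hlS s hs
    · rw [List.mem_singleton.1 hs]
      exact near z y ν γ₂ hzy hν hy

/-- If right multiplication by each element of `S` moves orbit points by at most `M`, then a
word of length `n` in `S ∪ S⁻¹` moves them by at most `M * n`. -/
lemma orbit_dist_word {Γ : Type*} [Group Γ] {X : Type*} [MetricSpace X] {φ : Γ → X} {M : ℝ}
    {S : Set Γ} (hM : ∀ s ∈ S, ∀ γ, dist (φ γ) (φ (γ * s)) ≤ M) (l : List Γ) :
    (∀ s ∈ l, s ∈ S ∨ s⁻¹ ∈ S) → ∀ γ, dist (φ γ) (φ (γ * l.prod)) ≤ M * l.length := by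
  induction l with
  | nil => intro _ γ; simp
  | cons s l ih =>
    intro hl γ
    have h1 := ih (fun t ht => hl t (List.mem_cons_of_mem _ ht)) (γ * s)
    have h2 : dist (φ γ) (φ (γ * s)) ≤ M := by
      rcases hl s List.mem_cons_self with hs | hs
      · exact hM s hs γ
      · simpa [dist_comm] using hM _ hs (γ * s)
    have h3 := dist_triangle (φ γ) (φ (γ * s)) (φ (γ * s * l.prod))
    rw [List.prod_cons, ← mul_assoc, List.length_cons]
    push_cast
    linarith

/-- **Milnor–Švarc Lemma for quasi-actions.** If a group `Γ` has a geometric `k`-quasi-action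
on a nonempty geodesic metric space `X`, then `Γ` is finitely generated and the orbit map
`γ ↦ h γ x₀` is a quasi-isometric embedding with coarsely dense image (hence a
quasi-isometry) with respect to a word metric on `Γ`. -/
theorem milnor_svarc_quasi_action {Γ : Type*} [Group Γ] {X : Type*} [MetricSpace X]
    [Nonempty X] (x₀ : X) (k : ℝ) (hk : 1 ≤ k) (h : Γ → X → X)
    (hgeodesic : GeodesicOn (dist : X → X → ℝ))
    (hqa : QuasiActionOn dist k h)
    (hcobounded : CoboundedQAOn dist h)
    (hproper : ProperQAOn dist h) :
    ∃ S : Finset Γ, Subgroup.closure (S : Set Γ) = ⊤ ∧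
      ∃ k' ≥ (1 : ℝ), ∃ c' ≥ (0 : ℝ), ∃ r ≥ (0 : ℝ),
        QIEmbOn (wordDist (S : Set Γ)) dist k' c' (fun γ => h γ x₀) ∧
        RDenseOn dist r (Set.range fun γ => h γ x₀) := by
  have hk0 : 0 < k := by linarith
  obtain ⟨a, ha, x₁, hx₁⟩ := hcobounded
  obtain ⟨r, hr, hdense⟩ : ∃ r ≥ (0 : ℝ), ∀ x, ∃ γ, dist x (h γ x₀) ≤ r := by
    -- The dense orbit may have another basepoint `x₁`; moving it to `x₀` costs
    -- `k * dist x₁ x₀ + k`.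
    refine ⟨a + (k * dist x₁ x₀ + k), by positivity, fun x => ?_⟩
    obtain ⟨γ, hγ⟩ := hx₁ x
    have h1 := ((hqa.1 γ).1 x₁ x₀).2
    exact ⟨γ, (dist_triangle x (h γ x₁) (h γ x₀)).trans (by linarith)⟩
  obtain ⟨R, hRdef⟩ : ∃ R, R = k * (2 * r + 1 + 2 * k) := ⟨_, rfl⟩
  have hR : 0 ≤ R := by rw [hRdef]; positivity
  have hfin : {g : Γ | dist x₀ (h g x₀) ≤ R}.Finite := by
    refine (hproper (Metric.closedBall x₀ R) ⟨R + R, fun x hx y hy => ?_⟩).subset ?_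
    · exact (dist_triangle_right x y x₀).trans (add_le_add hx hy)
    · intro g hg
      refine ⟨h g x₀, ⟨x₀, Metric.mem_closedBall_self hR, rfl⟩, ?_⟩
      rw [Metric.mem_closedBall, dist_comm]
      exact hg
  have hS : ∀ γ₁ γ₂, dist (h γ₁ x₀) (h γ₂ x₀) ≤ 2 * r + 1 →
      γ₁⁻¹ * γ₂ ∈ {g : Γ | dist x₀ (h g x₀) ≤ R} := by
    intro γ₁ γ₂ hd
    have h1 := (orbit_displacement hqa x₀ γ₁ (γ₁⁻¹ * γ₂)).1
    rw [mul_inv_cancel_left] at h1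
    have h2 : dist x₀ (h (γ₁⁻¹ * γ₂) x₀) / k ≤ 2 * r + 1 + 2 * k := by linarith
    rw [div_le_iff₀ hk0] at h2
    change _ ≤ R
    rw [hRdef]
    linarith
  have hword : ∀ γ₁ γ₂ : Γ, ∃ l : List Γ,
      l.length = ⌈dist (h γ₁ x₀) (h γ₂ x₀)⌉₊ + 1 ∧
      (∀ s ∈ l, s ∈ {g : Γ | dist x₀ (h g x₀) ≤ R}) ∧ l.prod = γ₁⁻¹ * γ₂ := fun γ₁ γ₂ =>
    exists_word_of_dist_le hgeodesic (φ := fun γ => h γ x₀) hdense hS _ _ _ γ₁ γ₂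
      (Nat.le_ceil _) (by simpa using hr) (by simpa using hr)
  have hM1 : 1 ≤ k * R + 2 * k := by nlinarith
  refine ⟨hfin.toFinset, ?_, k * R + 2 * k, hM1, 2, by norm_num, r, hr, ?_, ?_⟩
  · rw [Set.Finite.coe_toFinset, eq_top_iff]
    intro g _
    obtain ⟨l, -, hl, hp⟩ := hword 1 g
    rw [inv_one, one_mul] at hp
    rw [← hp]
    exact Subgroup.list_prod_mem _ fun s hs => Subgroup.subset_closure (hl s hs)
  · rw [Set.Finite.coe_toFinset]
    intro γ₁ γ₂
    obtain ⟨l, hlen, hl, hp⟩ := hword γ₁ γ₂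
    constructor
    · have h1 : wordLength {g : Γ | dist x₀ (h g x₀) ≤ R} (γ₁⁻¹ * γ₂) ≤
          ⌈dist (h γ₁ x₀) (h γ₂ x₀)⌉₊ + 1 :=
        Nat.sInf_le ⟨l, hlen, fun s hs => Or.inl (hl s hs), hp⟩
      have h2 : wordDist {g : Γ | dist x₀ (h g x₀) ≤ R} γ₁ γ₂ ≤
          (⌈dist (h γ₁ x₀) (h γ₂ x₀)⌉₊ : ℝ) + 1 := by
        unfold wordDist
        exact_mod_cast h1
      have h3 := Nat.ceil_lt_add_one (dist_nonneg (x := h γ₁ x₀) (y := h γ₂ x₀))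
      have h4 : wordDist {g : Γ | dist x₀ (h g x₀) ≤ R} γ₁ γ₂ / (k * R + 2 * k) ≤
          wordDist {g : Γ | dist x₀ (h g x₀) ≤ R} γ₁ γ₂ :=
        div_le_self (Nat.cast_nonneg _) hM1
      linarith
    · obtain ⟨w, hwlen, hw, hwp⟩ :=
        exists_word_length_eq ⟨l, fun s hs => Or.inl (hl s hs), hp⟩
      have h1 := orbit_dist_word (φ := fun γ => h γ x₀) (M := k * R + 2 * k)
        (fun s hs γ => by
          have h2 := (orbit_displacement hqa x₀ γ s).2
          have h3 : k * dist x₀ (h s x₀) ≤ k * R := mul_le_mul_of_nonneg_left hs hk0.le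
          exact h2.trans (by linarith)) w hw γ₁
      rw [hwp, mul_inv_cancel_left, hwlen] at h1
      unfold wordDist
      linarith
  · intro x
    obtain ⟨γ, hγ⟩ := hdense x
    exact ⟨_, ⟨γ, rfl⟩, hγ⟩
end
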